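/- arXiv:1712.03913 — 10 statements merged into one kernel-verified Lean document; each statement's English description precedes it below -/
import Mathlib

section
/- Under Assumption 2.b, every sequential maximization pair (i_s, j_s) is feasible, i.e., ¬T1 i_s, ¬T2 j_s and ¬C i_s j_s. -/
open scoped Classical

noncomputable section

/-- Sequential game payoff of the leader (depends only on his own trajectory). -/
def aSeq {Γ1 : Type*} (κ : ℝ) (T1 : Γ1 → Prop) (p1 : Γ1 → ℝ) (i : Γ1) : ℝ :=
  if T1 i then κ else p1 i

/-- Follower payoff (same in the sequential and the cooperative game). -/
def bPay {Γ1 Γ2 : Type*} (κ lam : ℝ) (T2 : Γ2 → Prop) (C : Γ1 → Γ2 → Prop)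
    (p2 : Γ2 → ℝ) (i : Γ1) (j : Γ2) : ℝ :=
  if T2 j then κ else if C i j then lam else p2 j

/-- Cooperative game payoff of the leader. -/
def aPay {Γ1 Γ2 : Type*} (κ lam : ℝ) (T1 : Γ1 → Prop) (C : Γ1 → Γ2 → Prop)
    (p1 : Γ1 → ℝ) (i : Γ1) (j : Γ2) : ℝ :=
  if T1 i then κ else if C i j then lam else p1 i

/-- Blocking game payoff of the leader. -/
def aBl {Γ1 Γ2 : Type*} (κ lam w : ℝ) (T1 : Γ1 → Prop) (C : Γ1 → Γ2 → Prop)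
    (p1 : Γ1 → ℝ) (p2 : Γ2 → ℝ) (i : Γ1) (j : Γ2) : ℝ :=
  if T1 i then κ else if C i j then lam else if p1 i < p2 j then p1 i else p1 i + w

/-- Blocking game payoff of the follower. -/
def bBl {Γ1 Γ2 : Type*} (κ lam w : ℝ) (T2 : Γ2 → Prop) (C : Γ1 → Γ2 → Prop)
    (p1 : Γ1 → ℝ) (p2 : Γ2 → ℝ) (i : Γ1) (j : Γ2) : ℝ :=
  if T2 j then κ else if C i j then lam else if p1 i ≥ p2 j then p2 j else p2 j + w

/-- A trajectory pair is feasible: stays on track and does not collide. -/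
def Feasible {Γ1 Γ2 : Type*} (T1 : Γ1 → Prop) (T2 : Γ2 → Prop) (C : Γ1 → Γ2 → Prop)
    (i : Γ1) (j : Γ2) : Prop :=
  ¬ T1 i ∧ ¬ T2 j ∧ ¬ C i j

/-- Best-response set of player 2 to strategy `i` of player 1. -/
def BestResponse {Γ1 Γ2 : Type*} (B : Γ1 → Γ2 → ℝ) (i : Γ1) : Set Γ2 :=
  {j | ∀ j', B i j' ≤ B i j}

/-- Stackelberg equilibrium with player 1 as leader. -/
def StackelbergEq {Γ1 Γ2 : Type*} (A B : Γ1 → Γ2 → ℝ) (iStar : Γ1) (jStar : Γ2) : Prop :=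
  (∀ i, sInf (A i '' BestResponse B i) ≤ sInf (A iStar '' BestResponse B iStar)) ∧
  jStar ∈ BestResponse B iStar

/-- Pure-strategy Nash equilibrium. -/
def NashEq {Γ1 Γ2 : Type*} (A B : Γ1 → Γ2 → ℝ) (iStar : Γ1) (jStar : Γ2) : Prop :=
  (∀ i, A i jStar ≤ A iStar jStar) ∧ (∀ j, B iStar j ≤ B iStar jStar)

/-- Sequential maximization pair: the leader maximizes `aSeq`, the follower best responds. -/
def SeqMaxPair {Γ1 Γ2 : Type*} (κ lam : ℝ) (T1 : Γ1 → Prop) (T2 : Γ2 → Prop)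
    (C : Γ1 → Γ2 → Prop) (p1 : Γ1 → ℝ) (p2 : Γ2 → ℝ) (iS : Γ1) (jS : Γ2) : Prop :=
  (∀ i, aSeq κ T1 p1 i ≤ aSeq κ T1 p1 iS) ∧
  (∀ j, bPay κ lam T2 C p2 iS j ≤ bPay κ lam T2 C p2 iS jS)

/-- Assumption 2.a: a feasible trajectory pair exists. -/
def AssumptionA {Γ1 Γ2 : Type*} (T1 : Γ1 → Prop) (T2 : Γ2 → Prop)
    (C : Γ1 → Γ2 → Prop) : Prop :=
  ∃ i j, Feasible T1 T2 C i j

/-- Assumption 2.b. -/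
def AssumptionB {Γ1 Γ2 : Type*} (κ lam : ℝ) (T1 : Γ1 → Prop) (T2 : Γ2 → Prop)
    (C : Γ1 → Γ2 → Prop) (p1 : Γ1 → ℝ) (p2 : Γ2 → ℝ) : Prop :=
  (∃ i, ¬ T1 i) ∧
  ∃ jbar : Γ2, ∀ i' : Γ1, (∀ i, aSeq κ T1 p1 i ≤ aSeq κ T1 p1 i') →
    lam < bPay κ lam T2 C p2 i' jbar

/-- Blocking trajectory pair. -/
def BlockingPair {Γ1 Γ2 : Type*} (T1 : Γ1 → Prop) (T2 : Γ2 → Prop)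
    (C : Γ1 → Γ2 → Prop) (p1 : Γ1 → ℝ) (p2 : Γ2 → ℝ) (i : Γ1) (j : Γ2) : Prop :=
  Feasible T1 T2 C i j ∧ p2 j < p1 i ∧ ∀ jc, p2 j < p2 jc → (T2 jc ∨ C i jc)

theorem stmt1 {Γ1 Γ2 : Type*} [Fintype Γ1] [Fintype Γ2] [Nonempty Γ1] [Nonempty Γ2]
    (κ lam : ℝ) (hκlam : κ < lam) (hlam0 : lam < 0)
    (T1 : Γ1 → Prop) (T2 : Γ2 → Prop) (C : Γ1 → Γ2 → Prop)
    (p1 : Γ1 → ℝ) (p2 : Γ2 → ℝ)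
    (hp1 : ∀ i, 0 < p1 i) (hp2 : ∀ j, 0 < p2 j)
    (hB : AssumptionB κ lam T1 T2 C p1 p2)
    (iS : Γ1) (jS : Γ2)
    (hseq : SeqMaxPair κ lam T1 T2 C p1 p2 iS jS) :
    Feasible T1 T2 C iS jS := by
  obtain ⟨⟨i, hi⟩, jbar, hbar⟩ := hB
  obtain ⟨hlead, hfollow⟩ := hseq
  have ha := hlead i
  have hb := (hbar iS hlead).trans_le (hfollow jbar)
  refine ⟨fun hT => ?_, fun hT => ?_, fun hC => ?_⟩
  · simp only [aSeq, if_neg hi, if_pos hT] at ha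
    linarith [hp1 i]
  · simp only [bPay, if_pos hT] at hb
    linarith
  · by_cases hT : T2 jS
    · simp only [bPay, if_pos hT] at hb
      linarith
    · simp [bPay, hT, hC] at hb

end
end

section
/- Under Assumption 2.a, every Stackelberg equilibrium (i*, j*) of the cooperative game is feasible, i.e., ¬T1 i*, ¬T2 j* and ¬C i* j*. -/
open scoped Classical

noncomputable section

/-- If `i` belongs to a feasible pair, the leader gets a nonnegative payoff against every best
response to `i`. -/
theorem aPay_nonneg_of_mem_bestResponse {Γ1 Γ2 : Type*} {κ lam : ℝ} (hκlam : κ < lam)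
    (hlam0 : lam < 0) {T1 : Γ1 → Prop} {T2 : Γ2 → Prop} {C : Γ1 → Γ2 → Prop}
    {p1 : Γ1 → ℝ} {p2 : Γ2 → ℝ} (hp1 : ∀ i, 0 < p1 i) (hp2 : ∀ j, 0 < p2 j)
    {i : Γ1} {j j' : Γ2} (hf : Feasible T1 T2 C i j)
    (hj' : j' ∈ BestResponse (bPay κ lam T2 C p2) i) : 0 ≤ aPay κ lam T1 C p1 i j' := by
  obtain ⟨h1, h2, h3⟩ := hf
  have hb := hj' j
  have hpos := hp2 j
  have hpos' := hp1 i
  simp only [bPay, aPay, h1, h2, h3, if_false] at hb ⊢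
  split_ifs at hb ⊢ <;> linarith

/-- If some follower trajectory stays on track, then so does every best response. -/
theorem not_offTrack_of_mem_bestResponse {Γ1 Γ2 : Type*} {κ lam : ℝ} (hκlam : κ < lam)
    (hlam0 : lam < 0) {T2 : Γ2 → Prop} {C : Γ1 → Γ2 → Prop} {p2 : Γ2 → ℝ}
    (hp2 : ∀ j, 0 < p2 j) {i : Γ1} {j j' : Γ2} (hj : ¬ T2 j)
    (hj' : j' ∈ BestResponse (bPay κ lam T2 C p2) i) : ¬ T2 j' := by
  intro ht
  have hb := hj' j
  have hpos := hp2 j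
  simp only [bPay, hj, ht, if_false, if_true] at hb
  split_ifs at hb <;> linarith

theorem stmt3 {Γ1 Γ2 : Type*} [Fintype Γ1] [Fintype Γ2] [Nonempty Γ1] [Nonempty Γ2]
    (κ lam : ℝ) (hκlam : κ < lam) (hlam0 : lam < 0)
    (T1 : Γ1 → Prop) (T2 : Γ2 → Prop) (C : Γ1 → Γ2 → Prop)
    (p1 : Γ1 → ℝ) (p2 : Γ2 → ℝ)
    (hp1 : ∀ i, 0 < p1 i) (hp2 : ∀ j, 0 < p2 j)
    (hA : AssumptionA T1 T2 C)
    (iStar : Γ1) (jStar : Γ2)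
    (hst : StackelbergEq (aPay κ lam T1 C p1) (bPay κ lam T2 C p2) iStar jStar) :
    Feasible T1 T2 C iStar jStar := by
  obtain ⟨i, j, hf⟩ := hA
  obtain ⟨hmax, hj⟩ := hst
  have hinf : 0 ≤ sInf (aPay κ lam T1 C p1 i '' BestResponse (bPay κ lam T2 C p2) i) := by
    apply Real.sInf_nonneg
    rintro _ ⟨j', hj', rfl⟩
    exact aPay_nonneg_of_mem_bestResponse hκlam hlam0 hp1 hp2 hf hj'
  have hle : sInf (aPay κ lam T1 C p1 iStar '' BestResponse (bPay κ lam T2 C p2) iStar) ≤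
      aPay κ lam T1 C p1 iStar jStar :=
    csInf_le (Set.toFinite _).bddBelow ⟨jStar, hj, rfl⟩
  have hnonneg : 0 ≤ aPay κ lam T1 C p1 iStar jStar := (hinf.trans (hmax i)).trans hle
  refine ⟨fun h1 => ?_, not_offTrack_of_mem_bestResponse hκlam hlam0 hp2 hf.2.1 hj, fun hc => ?_⟩
  · simp only [aPay, h1, if_true] at hnonneg
    linarith
  · simp only [aPay, hc, if_true] at hnonneg
    split_ifs at hnonneg <;> linarith

end
end

section
/- Under Assumption 2.a, every Stackelberg equilibrium of the cooperative game is also a pure-strategy Nash equilibrium of the cooperative game. -/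
open scoped Classical

noncomputable section

/-- If `i` admits a feasible continuation, every best response to `i` avoids a collision, so the
leader's worst case over best responses is his own progress. -/
theorem sInf_aPay_image_bestResponse {Γ1 Γ2 : Type*} [Finite Γ2] {κ lam : ℝ}
    (hκ : κ < 0) (hlam : lam < 0) {T1 : Γ1 → Prop} {T2 : Γ2 → Prop} {C : Γ1 → Γ2 → Prop}
    (p1 : Γ1 → ℝ) {p2 : Γ2 → ℝ} (hp2 : ∀ j, 0 < p2 j) {i : Γ1} {j : Γ2}
    (h : Feasible T1 T2 C i j) :
    sInf (aPay κ lam T1 C p1 i '' BestResponse (bPay κ lam T2 C p2) i) = p1 i := by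
  obtain ⟨hT1, hT2, hC⟩ := h
  have : Nonempty Γ2 := ⟨j⟩
  have hne : (BestResponse (bPay κ lam T2 C p2) i).Nonempty :=
    Finite.exists_max (bPay κ lam T2 C p2 i)
  have hconst : ∀ k ∈ BestResponse (bPay κ lam T2 C p2) i, aPay κ lam T1 C p1 i k = p1 i := by
    intro k hk
    have hjk := hk j
    have hj := hp2 j
    simp only [bPay, hT2, hC, if_false] at hjk
    have hCk : ¬ C i k := by
      intro hc
      split_ifs at hjk <;> linarith
    simp [aPay, hT1, hCk]
  rw [Set.image_congr hconst, hne.image_const, csInf_singleton]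

theorem stmt4 {Γ1 Γ2 : Type*} [Fintype Γ1] [Fintype Γ2] [Nonempty Γ1] [Nonempty Γ2]
    (κ lam : ℝ) (hκlam : κ < lam) (hlam0 : lam < 0)
    (T1 : Γ1 → Prop) (T2 : Γ2 → Prop) (C : Γ1 → Γ2 → Prop)
    (p1 : Γ1 → ℝ) (p2 : Γ2 → ℝ)
    (hp1 : ∀ i, 0 < p1 i) (hp2 : ∀ j, 0 < p2 j)
    (hA : AssumptionA T1 T2 C)
    (iStar : Γ1) (jStar : Γ2)
    (hst : StackelbergEq (aPay κ lam T1 C p1) (bPay κ lam T2 C p2) iStar jStar) :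
    NashEq (aPay κ lam T1 C p1) (bPay κ lam T2 C p2) iStar jStar := by
  obtain ⟨hlead, hbest⟩ := hst
  have hκ : κ < 0 := hκlam.trans hlam0
  obtain ⟨i₀, j₀, h₀⟩ := hA
  have hdom : ∀ {i j}, Feasible T1 T2 C i j → p1 i ≤ aPay κ lam T1 C p1 iStar jStar := by
    intro i j h
    rw [← sInf_aPay_image_bestResponse hκ hlam0 p1 hp2 h]
    exact (hlead i).trans
      (csInf_le (Set.toFinite _).bddBelow (Set.mem_image_of_mem _ hbest))
  have hpos : 0 < aPay κ lam T1 C p1 iStar jStar := (hp1 i₀).trans_le (hdom h₀)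
  have hT2 : ¬ T2 jStar := by
    intro hT
    have hle := hbest j₀
    have hj₀ := hp2 j₀
    simp only [bPay, hT, h₀.2.1, if_true, if_false] at hle
    split_ifs at hle <;> linarith
  refine ⟨fun i => ?_, hbest⟩
  by_cases hT1 : T1 i
  · rw [aPay, if_pos hT1]
    exact (hκ.trans hpos).le
  by_cases hC : C i jStar
  · rw [aPay, if_neg hT1, if_pos hC]
    exact (hlam0.trans hpos).le
  · rw [aPay, if_neg hT1, if_neg hC]
    exact hdom ⟨hT1, hT2, hC⟩

end
end

section
/- Under Assumption 2.a, the cooperative game possesses at least one feasible pure-strategy Nash equilibrium. -/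
open scoped Classical

noncomputable section

theorem stmt5 {Γ1 Γ2 : Type*} [Fintype Γ1] [Fintype Γ2] [Nonempty Γ1] [Nonempty Γ2]
    (κ lam : ℝ) (hκlam : κ < lam) (hlam0 : lam < 0)
    (T1 : Γ1 → Prop) (T2 : Γ2 → Prop) (C : Γ1 → Γ2 → Prop)
    (p1 : Γ1 → ℝ) (p2 : Γ2 → ℝ)
    (hp1 : ∀ i, 0 < p1 i) (hp2 : ∀ j, 0 < p2 j)
    (hA : AssumptionA T1 T2 C) :
    ∃ (iStar : Γ1) (jStar : Γ2),
      NashEq (aPay κ lam T1 C p1) (bPay κ lam T2 C p2) iStar jStar ∧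
      Feasible T1 T2 C iStar jStar := by
  obtain ⟨i₀, j₀, h₀⟩ := hA
  obtain ⟨⟨i, j⟩, hij, hmax⟩ :=
    Set.exists_max_image {q : Γ1 × Γ2 | Feasible T1 T2 C q.1 q.2}
      (fun q => p1 q.1 + p2 q.2) (Set.toFinite _) ⟨(i₀, j₀), h₀⟩
  obtain ⟨hi, hj, hc⟩ := hij
  refine ⟨i, j, ⟨fun i' => ?_, fun j' => ?_⟩, hi, hj, hc⟩
  · have hpos := hp1 i
    simp only [aPay, if_neg hi, if_neg hc]
    split_ifs with hi' hc'
    · linarith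
    · linarith
    · have hle := hmax (i', j) ⟨hi', hj, hc'⟩
      exact le_of_add_le_add_right hle
  · have hpos := hp2 j
    simp only [bPay, if_neg hj, if_neg hc]
    split_ifs with hj' hc'
    · linarith
    · linarith
    · have hle := hmax (i, j') ⟨hi, hj', hc'⟩
      exact le_of_add_le_add_left hle

end
end

section
/- Under Assumption 2.a, every pure-strategy Nash equilibrium (i,j) of the cooperative game that is not feasible satisfies ¬T1 i, ¬T2 j and C i j; consequently both players receive payoff λ, i.e., a(i,j) = b(i,j) = λ. -/
open scoped Classical

noncomputable section

theorem stmt6 {Γ1 Γ2 : Type*} [Fintype Γ1] [Fintype Γ2] [Nonempty Γ1] [Nonempty Γ2]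
    (κ lam : ℝ) (hκlam : κ < lam) (hlam0 : lam < 0)
    (T1 : Γ1 → Prop) (T2 : Γ2 → Prop) (C : Γ1 → Γ2 → Prop)
    (p1 : Γ1 → ℝ) (p2 : Γ2 → ℝ)
    (hp1 : ∀ i, 0 < p1 i) (hp2 : ∀ j, 0 < p2 j)
    (hA : AssumptionA T1 T2 C)
    (i : Γ1) (j : Γ2)
    (hnash : NashEq (aPay κ lam T1 C p1) (bPay κ lam T2 C p2) i j)
    (hinfeas : ¬ Feasible T1 T2 C i j) :
    ¬ T1 i ∧ ¬ T2 j ∧ C i j ∧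
      aPay κ lam T1 C p1 i j = lam ∧ bPay κ lam T2 C p2 i j = lam := by
  obtain ⟨i₀, j₀, hi₀, hj₀, -⟩ := hA
  have hTi : ¬ T1 i := fun hT => by
    have h := hnash.1 i₀
    have hp := hp1 i₀
    simp only [aPay, if_pos hT, if_neg hi₀] at h
    split_ifs at h <;> linarith
  have hTj : ¬ T2 j := fun hT => by
    have h := hnash.2 j₀
    have hp := hp2 j₀
    simp only [bPay, if_pos hT, if_neg hj₀] at h
    split_ifs at h <;> linarith
  have hC : C i j := by_contra fun hC => hinfeas ⟨hTi, hTj, hC⟩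
  exact ⟨hTi, hTj, hC, by simp [aPay, hTi, hC], by simp [bPay, hTj, hC]⟩

end
end

section
/- Under Assumption 2.a, every feasible pure-strategy Nash equilibrium of the cooperative game is better than every infeasible pure-strategy Nash equilibrium of the cooperative game. -/
open scoped Classical

noncomputable section

theorem stmt7 {Γ1 Γ2 : Type*} [Fintype Γ1] [Fintype Γ2] [Nonempty Γ1] [Nonempty Γ2]
    (κ lam : ℝ) (hκlam : κ < lam) (hlam0 : lam < 0)
    (T1 : Γ1 → Prop) (T2 : Γ2 → Prop) (C : Γ1 → Γ2 → Prop)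
    (p1 : Γ1 → ℝ) (p2 : Γ2 → ℝ)
    (hp1 : ∀ i, 0 < p1 i) (hp2 : ∀ j, 0 < p2 j)
    (hA : AssumptionA T1 T2 C)
    (i1 : Γ1) (j1 : Γ2) (i2 : Γ1) (j2 : Γ2)
    (h1 : NashEq (aPay κ lam T1 C p1) (bPay κ lam T2 C p2) i1 j1)
    (hf1 : Feasible T1 T2 C i1 j1)
    (h2 : NashEq (aPay κ lam T1 C p1) (bPay κ lam T2 C p2) i2 j2)
    (hf2 : ¬ Feasible T1 T2 C i2 j2) :
    aPay κ lam T1 C p1 i2 j2 ≤ aPay κ lam T1 C p1 i1 j1 ∧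
    bPay κ lam T2 C p2 i2 j2 ≤ bPay κ lam T2 C p2 i1 j1 ∧
    (aPay κ lam T1 C p1 i2 j2 < aPay κ lam T1 C p1 i1 j1 ∨
      bPay κ lam T2 C p2 i2 j2 < bPay κ lam T2 C p2 i1 j1) := by
  obtain ⟨hT1, hT2, hC⟩ := hf1
  have hT1' : ¬ T1 i2 := fun h ↦ by
    have hle := h2.1 i1
    simp only [aPay, hT1, h, if_true, if_false] at hle
    split_ifs at hle <;> linarith [hp1 i1]
  have hT2' : ¬ T2 j2 := fun h ↦ by
    have hle := h2.2 j1
    simp only [bPay, hT2, h, if_true, if_false] at hle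
    split_ifs at hle <;> linarith [hp2 j1]
  have hC' : C i2 j2 := by
    by_contra h
    exact hf2 ⟨hT1', hT2', h⟩
  have ha : aPay κ lam T1 C p1 i2 j2 < aPay κ lam T1 C p1 i1 j1 := by
    simpa only [aPay, hT1, hC, hT1', hC', if_true, if_false] using hlam0.trans (hp1 i1)
  have hb : bPay κ lam T2 C p2 i2 j2 < bPay κ lam T2 C p2 i1 j1 := by
    simpa only [bPay, hT2, hC, hT2', hC', if_true, if_false] using hlam0.trans (hp2 j1)
  exact ⟨ha.le, hb.le, Or.inl ha⟩

end
end

section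
/- Under Assumption 2.b, a pair (i,j) is a sequential maximization pair if and only if it is a Stackelberg equilibrium of the cooperative game; in particular the set of Stackelberg equilibria of the cooperative game equals the set of sequential maximization pairs and is nonempty. -/
open scoped Classical

noncomputable section

theorem bestResponse_nonempty {Γ1 Γ2 : Type*} [Finite Γ2] [Nonempty Γ2] (B : Γ1 → Γ2 → ℝ)
    (i : Γ1) : (BestResponse B i).Nonempty :=
  Finite.exists_max (B i)

theorem aPay_le_aSeq {Γ1 Γ2 : Type*} {κ lam : ℝ} {T1 : Γ1 → Prop} (C : Γ1 → Γ2 → Prop)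
    {p1 : Γ1 → ℝ} {i : Γ1} (h : lam ≤ p1 i) (j : Γ2) :
    aPay κ lam T1 C p1 i j ≤ aSeq κ T1 p1 i := by
  unfold aPay aSeq
  split_ifs <;> simp [h]

theorem aPay_eq_aSeq {Γ1 Γ2 : Type*} {κ lam : ℝ} {T1 : Γ1 → Prop} {C : Γ1 → Γ2 → Prop}
    {p1 : Γ1 → ℝ} {i : Γ1} {j : Γ2} (h : ¬ C i j) :
    aPay κ lam T1 C p1 i j = aSeq κ T1 p1 i := by
  simp [aPay, aSeq, h]

/-- A follower payoff above the collision penalty rules out a collision. -/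
theorem not_collision_of_lt_bPay {Γ1 Γ2 : Type*} {κ lam : ℝ} (hκlam : κ ≤ lam)
    {T2 : Γ2 → Prop} {C : Γ1 → Γ2 → Prop} {p2 : Γ2 → ℝ} {i : Γ1} {j : Γ2}
    (h : lam < bPay κ lam T2 C p2 i j) : ¬ C i j := by
  intro hC
  unfold bPay at h
  split_ifs at h <;> linarith

/-- The guaranteed cooperative payoff of the leader never exceeds the sequential one. -/
theorem sInf_aPay_le_aSeq {Γ1 Γ2 : Type*} [Finite Γ2] [Nonempty Γ2] {κ lam : ℝ}
    {T1 : Γ1 → Prop} (C : Γ1 → Γ2 → Prop) {p1 : Γ1 → ℝ} (B : Γ1 → Γ2 → ℝ) {i : Γ1}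
    (h : lam ≤ p1 i) :
    sInf (aPay κ lam T1 C p1 i '' BestResponse B i) ≤ aSeq κ T1 p1 i := by
  obtain ⟨j, hj⟩ := bestResponse_nonempty B i
  exact (csInf_le (Set.toFinite _).bddBelow (Set.mem_image_of_mem _ hj)).trans
    (aPay_le_aSeq C h j)

/-- If the follower can secure more than the collision penalty against `i`, then the guaranteed
cooperative payoff of the leader at `i` is the sequential one. -/
theorem sInf_aPay_eq_aSeq {Γ1 Γ2 : Type*} [Finite Γ2] [Nonempty Γ2] {κ lam : ℝ}
    (hκlam : κ ≤ lam) {T1 : Γ1 → Prop} {T2 : Γ2 → Prop} {C : Γ1 → Γ2 → Prop}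
    {p1 : Γ1 → ℝ} {p2 : Γ2 → ℝ} {i : Γ1} {jbar : Γ2}
    (h : lam < bPay κ lam T2 C p2 i jbar) :
    sInf (aPay κ lam T1 C p1 i '' BestResponse (bPay κ lam T2 C p2) i) = aSeq κ T1 p1 i := by
  have himage : aPay κ lam T1 C p1 i '' BestResponse (bPay κ lam T2 C p2) i
      = {aSeq κ T1 p1 i} := by
    rw [← (bestResponse_nonempty (bPay κ lam T2 C p2) i).image_const]
    exact Set.image_congr fun j hj =>
      aPay_eq_aSeq (not_collision_of_lt_bPay hκlam (h.trans_le (hj jbar)))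
  rw [himage, csInf_singleton]

theorem stmt8 {Γ1 Γ2 : Type*} [Fintype Γ1] [Fintype Γ2] [Nonempty Γ1] [Nonempty Γ2]
    (κ lam : ℝ) (hκlam : κ < lam) (hlam0 : lam < 0)
    (T1 : Γ1 → Prop) (T2 : Γ2 → Prop) (C : Γ1 → Γ2 → Prop)
    (p1 : Γ1 → ℝ) (p2 : Γ2 → ℝ)
    (hp1 : ∀ i, 0 < p1 i) (hp2 : ∀ j, 0 < p2 j)
    (hB : AssumptionB κ lam T1 T2 C p1 p2) :
    (∀ (i : Γ1) (j : Γ2), SeqMaxPair κ lam T1 T2 C p1 p2 i j ↔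
      StackelbergEq (aPay κ lam T1 C p1) (bPay κ lam T2 C p2) i j) ∧
    ∃ (i : Γ1) (j : Γ2), StackelbergEq (aPay κ lam T1 C p1) (bPay κ lam T2 C p2) i j := by
  obtain ⟨-, jbar, hjbar⟩ := hB
  have hle : ∀ i, sInf (aPay κ lam T1 C p1 i '' BestResponse (bPay κ lam T2 C p2) i)
      ≤ aSeq κ T1 p1 i :=
    fun i => sInf_aPay_le_aSeq C _ (hlam0.trans (hp1 i)).le
  have heq : ∀ i, (∀ i', aSeq κ T1 p1 i' ≤ aSeq κ T1 p1 i) →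
      sInf (aPay κ lam T1 C p1 i '' BestResponse (bPay κ lam T2 C p2) i) = aSeq κ T1 p1 i :=
    fun i hi => sInf_aPay_eq_aSeq hκlam.le (hjbar i hi)
  obtain ⟨i₀, hi₀⟩ := Finite.exists_max (aSeq κ T1 p1)
  have hiff : ∀ (i : Γ1) (j : Γ2), SeqMaxPair κ lam T1 T2 C p1 p2 i j ↔
      StackelbergEq (aPay κ lam T1 C p1) (bPay κ lam T2 C p2) i j := by
    refine fun i j => and_congr_left fun _ => ⟨fun hi i' => ?_, fun hi i' => ?_⟩
    · rw [heq i hi]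
      exact (hle i').trans (hi i')
    · calc aSeq κ T1 p1 i' ≤ aSeq κ T1 p1 i₀ := hi₀ i'
        _ = _ := (heq i₀ hi₀).symm
        _ ≤ _ := hi i₀
        _ ≤ aSeq κ T1 p1 i := hle i
  obtain ⟨j₀, hj₀⟩ := bestResponse_nonempty (bPay κ lam T2 C p2) i₀
  exact ⟨hiff, i₀, j₀, (hiff i₀ j₀).1 ⟨hi₀, hj₀⟩⟩

end
end

section
/- Let w ≥ 0 and suppose Assumption 2.a holds. If (i_cg, j_cg) is a Stackelberg equilibrium of the cooperative game with p1 i_cg > p2 j_cg, then (i_cg, j_cg) is a Stackelberg equilibrium of the blocking game. -/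
open scoped Classical

noncomputable section

/-- If player 2 can answer `i` feasibly, the cooperative value of `i` is at least `p1 i`. -/
theorem le_sInf_aPay_of_feasible {Γ1 Γ2 : Type*} [Finite Γ2] {κ lam : ℝ} (hκlam : κ < lam)
    (hlam0 : lam < 0) {T1 : Γ1 → Prop} {T2 : Γ2 → Prop} {C : Γ1 → Γ2 → Prop}
    {p1 : Γ1 → ℝ} {p2 : Γ2 → ℝ} (hp2 : ∀ j, 0 < p2 j) {i : Γ1} {j : Γ2}
    (h : Feasible T1 T2 C i j) :
    p1 i ≤ sInf (aPay κ lam T1 C p1 i '' BestResponse (bPay κ lam T2 C p2) i) := by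
  obtain ⟨hT1, hT2, hC⟩ := h
  have : Nonempty Γ2 := ⟨j⟩
  obtain ⟨m, hm⟩ := Finite.exists_max (bPay κ lam T2 C p2 i)
  refine le_csInf ⟨_, m, hm, rfl⟩ ?_
  rintro _ ⟨k, hk, rfl⟩
  have hjk := hk j
  have hj := hp2 j
  unfold bPay at hjk
  unfold aPay
  grind

theorem stmt11 {Γ1 Γ2 : Type*} [Fintype Γ1] [Fintype Γ2] [Nonempty Γ1] [Nonempty Γ2]
    (κ lam : ℝ) (hκlam : κ < lam) (hlam0 : lam < 0)
    (T1 : Γ1 → Prop) (T2 : Γ2 → Prop) (C : Γ1 → Γ2 → Prop)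
    (p1 : Γ1 → ℝ) (p2 : Γ2 → ℝ)
    (hp1 : ∀ i, 0 < p1 i) (hp2 : ∀ j, 0 < p2 j)
    (w : ℝ) (hw : 0 ≤ w)
    (hA : AssumptionA T1 T2 C)
    (icg : Γ1) (jcg : Γ2)
    (hst : StackelbergEq (aPay κ lam T1 C p1) (bPay κ lam T2 C p2) icg jcg)
    (hp : p2 jcg < p1 icg) :
    StackelbergEq (aBl κ lam w T1 C p1 p2) (bBl κ lam w T2 C p1 p2) icg jcg := by
  obtain ⟨hmax, hbr⟩ := hst
  obtain ⟨i₀, j₀, h₀⟩ := hA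
  have hval : ∀ i j, Feasible T1 T2 C i j → p1 i ≤ aPay κ lam T1 C p1 icg jcg := fun i j h =>
    (le_sInf_aPay_of_feasible hκlam hlam0 hp2 h).trans ((hmax i).trans
      (csInf_le (Set.toFinite _).bddBelow ⟨jcg, hbr, rfl⟩))
  have hpos : 0 < aPay κ lam T1 C p1 icg jcg := (hp1 i₀).trans_le (hval i₀ j₀ h₀)
  have hT1 : ¬ T1 icg := by unfold aPay at hpos; grind
  have hC : ¬ C icg jcg := by unfold aPay at hpos; grind
  have hT2 : ¬ T2 jcg := by
    have h := hbr j₀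
    have hj₀ := hp2 j₀
    have hT2₀ := h₀.2.1
    unfold bPay at h
    grind
  have heq : aPay κ lam T1 C p1 icg jcg = p1 icg := by simp [aPay, hT1, hC]
  -- The follower cannot overtake `icg` without colliding or leaving the track.
  have hblock : ∀ j, ¬ T2 j → ¬ C icg j → p2 j ≤ p2 jcg := fun j h2 hc => by
    simpa [bPay, h2, hc, hT2, hC] using hbr j
  have hbr' : jcg ∈ BestResponse (bBl κ lam w T2 C p1 p2) icg := by
    intro j
    have hj := hblock j
    have hjcg := hp2 jcg
    unfold bBl
    grind
  refine ⟨fun i => ?_, hbr'⟩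
  have hlow : p1 icg + w ≤
      sInf (aBl κ lam w T1 C p1 p2 icg '' BestResponse (bBl κ lam w T2 C p1 p2) icg) := by
    refine le_csInf ⟨_, jcg, hbr', rfl⟩ ?_
    rintro _ ⟨j, hj, rfl⟩
    have hle := hj jcg
    have hjb := hblock j
    have hjcg := hp2 jcg
    unfold bBl at hle
    unfold aBl
    grind
  refine le_trans ?_ hlow
  obtain ⟨j, hj⟩ := Finite.exists_max (bBl κ lam w T2 C p1 p2 i)
  refine csInf_le_of_le (Set.toFinite _).bddBelow ⟨j, hj, rfl⟩ ?_
  have hT2j : ¬ T2 j := by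
    have h := hj jcg
    have hjcg := hp2 jcg
    unfold bBl at h
    grind
  have hpi := hp1 icg
  have hfeas : ¬ T1 i → ¬ C i j → p1 i ≤ p1 icg := fun h1 hc =>
    heq ▸ hval i j ⟨h1, hT2j, hc⟩
  unfold aBl
  grind

end
end

section
/- Let w ≥ 0. If a blocking pair (i_b, j_b) is a pure-strategy Nash equilibrium of the cooperative game, then (i_b, j_b) is a pure-strategy Nash equilibrium of the blocking game. -/
open scoped Classical

noncomputable section

theorem stmt15 {Γ1 Γ2 : Type*} [Fintype Γ1] [Fintype Γ2] [Nonempty Γ1] [Nonempty Γ2]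
    (κ lam : ℝ) (hκlam : κ < lam) (hlam0 : lam < 0)
    (T1 : Γ1 → Prop) (T2 : Γ2 → Prop) (C : Γ1 → Γ2 → Prop)
    (p1 : Γ1 → ℝ) (p2 : Γ2 → ℝ)
    (hp1 : ∀ i, 0 < p1 i) (hp2 : ∀ j, 0 < p2 j)
    (w : ℝ) (hw : 0 ≤ w)
    (ib : Γ1) (jb : Γ2)
    (hbl : BlockingPair T1 T2 C p1 p2 ib jb)
    (hnash : NashEq (aPay κ lam T1 C p1) (bPay κ lam T2 C p2) ib jb) :
    NashEq (aBl κ lam w T1 C p1 p2) (bBl κ lam w T2 C p1 p2) ib jb := by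
  obtain ⟨⟨hT1, hT2, hC⟩, hlt, -⟩ := hbl
  obtain ⟨hA, hB⟩ := hnash
  have hpi := hp1 ib
  have hpj := hp2 jb
  constructor
  · intro i
    have hi := hA i
    simp only [aPay, aBl, if_neg hT1, if_neg hC, if_neg hlt.not_gt] at hi ⊢
    split_ifs at hi ⊢ <;> linarith
  · intro j
    have hj := hB j
    simp only [bPay, bBl, if_neg hT2, if_neg hC, if_pos hlt.le, ge_iff_le] at hj ⊢
    split_ifs at hj ⊢ <;> linarith

end
end

section
/- Exact soft-constraint reformulation: let S : Γ1 × Γ2 → ℝ be slack multipliers with S(i,j) > 0 whenever C i j. Then there exists σ > 0 such that for every pair (i,j) with C i j, both p1 i − σ·S(i,j) < λ and p2 j − σ·S(i,j) < λ; hence with penalty weight σ neither player can benefit from violating the collision constraints relative to the hard-constrained payoff λ. -/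
open scoped Classical

noncomputable section

theorem stmt17 {Γ1 Γ2 : Type*} [Fintype Γ1] [Fintype Γ2] [Nonempty Γ1] [Nonempty Γ2]
    (κ lam : ℝ) (hκlam : κ < lam) (hlam0 : lam < 0)
    (C : Γ1 → Γ2 → Prop)
    (p1 : Γ1 → ℝ) (p2 : Γ2 → ℝ)
    (hp1 : ∀ i, 0 < p1 i) (hp2 : ∀ j, 0 < p2 j)
    (S : Γ1 → Γ2 → ℝ)
    (hS : ∀ i j, C i j → 0 < S i j) :
    ∃ σ : ℝ, 0 < σ ∧ ∀ i j, C i j →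
      p1 i - σ * S i j < lam ∧ p2 j - σ * S i j < lam := by
  have key : ∀ i j, ∀ᶠ σ : ℝ in Filter.atTop, C i j →
      p1 i - σ * S i j < lam ∧ p2 j - σ * S i j < lam := by
    intro i j
    by_cases hC : C i j
    · have hlim := Filter.tendsto_id.atTop_mul_const (hS i j hC)
      filter_upwards [hlim.eventually_gt_atTop (p1 i - lam),
        hlim.eventually_gt_atTop (p2 j - lam)] with σ h₁ h₂ _
      exact ⟨sub_lt_comm.mp h₁, sub_lt_comm.mp h₂⟩
    · exact Filter.Eventually.of_forall fun _ h => absurd h hC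
  exact ((Filter.eventually_gt_atTop 0).and
    (Filter.eventually_all.2 fun i => Filter.eventually_all.2 (key i))).exists

end
end
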